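/- arXiv:2505.10501 — 3 statements merged into one kernel-verified Lean document; each statement's English description precedes it below -/
import Mathlib

section
/- Let T be a tree on vertex set {1,...,n} with n ≥ 2, let k ≥ 2 be even, and let c ∈ ℝ^n with Σ_{i=1}^n c_i = 0. Then M(c,...,c) = −2 Σ_{e ∈ E(T)} α_e^k, where α_e = Σ_{i ∈ A(e)} c_i. -/
/-!
In a tree, the minimal connected subgraph spanning a nonempty vertex set `U` consists exactly of
the edges `e` that *split* `U`, i.e. such that two vertices of `U` lie in different components of
`G - e`. Every connected subgraph through `U` must use each splitting edge, and the union of the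
paths from one root in `U` to the other members of `U` uses no other edge, since paths in a tree
are unique. So the Steiner distance counts the splitting edges (`steinerDist_eq_card`).

Exchanging sums, `M(c, ..., c)` becomes a sum over edges. For one edge `e` with sides `A` and `Aᶜ`,
the indicator that a tuple is split is `1 - [all entries in A] - [all entries in Aᶜ]`, so that the
contribution of `e` is `(∑ c)^k - α^k - (∑ c - α)^k` (`sum_split`). With `∑ c = 0` and `k` even
and positive this is `-2 α^k`.
-/

open scoped Classical

/-- The Steiner distance of a set `U` of vertices of a graph `G`: the minimum number of
edges of a connected subgraph of `G` whose vertex set contains `U`. -/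
noncomputable def steinerDist {n : ℕ} (G : SimpleGraph (Fin n)) (U : Set (Fin n)) : ℕ :=
  sInf {m | ∃ H : G.Subgraph, H.Connected ∧ U ⊆ H.verts ∧ H.edgeSet.ncard = m}

/-- The order-`k` Steiner distance multilinear form of a graph `G`. -/
noncomputable def steinerForm {n : ℕ} (G : SimpleGraph (Fin n)) (k : ℕ)
    (c : Fin k → Fin n → ℝ) : ℝ :=
  ∑ i : Fin k → Fin n, (steinerDist G (Set.range i) : ℝ) * ∏ j, c j (i j)

/-- `A` is a choice, for each edge `e` of `G`, of the vertex set of one of the two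
components of `G - e`. -/
def IsEdgeSideChoice {n : ℕ} (G : SimpleGraph (Fin n)) (A : Sym2 (Fin n) → Set (Fin n)) :
    Prop :=
  ∀ e ∈ G.edgeSet, ∃ u v : Fin n, e = s(u, v) ∧
    A e = {w | (G.deleteEdges {e}).Reachable v w}

variable {n : ℕ} {G : SimpleGraph (Fin n)}

/-- An edge on a path of a tree separates the ends of the path, by uniqueness of paths. -/
lemma not_reachable_of_mem_path (hT : G.IsTree) {r u : Fin n} (p : G.Walk r u) (hp : p.IsPath)
    {e : Sym2 (Fin n)} (he : e ∈ p.edges) : ¬ (G.deleteEdges {e}).Reachable r u := by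
  intro h
  obtain ⟨q, hq⟩ := h.exists_isPath
  have hle : G.deleteEdges {e} ≤ G := SimpleGraph.deleteEdges_le _
  have h1 : (q.mapLe hle).IsPath := hq.mapLe hle
  have h2 : p = q.mapLe hle := (hT.existsUnique_path r u).unique hp h1
  rw [h2, SimpleGraph.Walk.edges_mapLe_eq_edges] at he
  have := q.edges_subset_edgeSet he
  simp [SimpleGraph.edgeSet_deleteEdges] at this

/-- The union of the tree paths from `r` to the vertices of `U`, a connected subgraph
all of whose edges separate `r` from some vertex of `U`. -/
lemma exists_spanning_subgraph (hT : G.IsTree) (r : Fin n) (U : Finset (Fin n)) :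
    ∃ H : G.Subgraph, H.Connected ∧ r ∈ H.verts ∧ (U : Set (Fin n)) ⊆ H.verts ∧
      ∀ e ∈ H.edgeSet, ∃ u ∈ U, ¬ (G.deleteEdges {e}).Reachable r u := by
  induction U using Finset.induction_on with
  | empty =>
    refine ⟨G.singletonSubgraph r, SimpleGraph.Subgraph.singletonSubgraph_connected, ?_⟩
    simp
  | insert u U _ ih =>
    obtain ⟨H, hH, hr, hU, hE⟩ := ih
    obtain ⟨p, hp, -⟩ := hT.existsUnique_path r u
    refine ⟨H ⊔ p.toSubgraph, SimpleGraph.Subgraph.connected_sup hH.preconnected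
      p.toSubgraph_connected.preconnected ⟨r, hr, by simp⟩, Or.inl hr, ?_, ?_⟩
    · intro w hw
      rw [Finset.coe_insert] at hw
      rcases hw with rfl | hw
      · exact Or.inr (by simp)
      · exact Or.inl (hU hw)
    · intro e he
      rw [SimpleGraph.Subgraph.edgeSet_sup] at he
      rcases he with he | he
      · obtain ⟨w, hw, h⟩ := hE e he
        exact ⟨w, Finset.mem_insert_of_mem hw, h⟩
      · rw [SimpleGraph.Walk.mem_edges_toSubgraph] at he
        exact ⟨u, Finset.mem_insert_self _ _, not_reachable_of_mem_path hT p hp he⟩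

/-- A connected subgraph avoiding `e` lies within one component of `G - e`. -/
lemma reachable_of_notMem_edgeSet {H : G.Subgraph} (hH : H.Connected) {e : Sym2 (Fin n)}
    (he : e ∉ H.edgeSet) {x y : Fin n} (hx : x ∈ H.verts) (hy : y ∈ H.verts) :
    (G.deleteEdges {e}).Reachable x y := by
  let f : H.coe →g G.deleteEdges {e} :=
    ⟨Subtype.val, by
      intro a b hab
      have hab' : H.Adj a b := hab
      rw [SimpleGraph.deleteEdges_adj]
      refine ⟨hab'.adj_sub, fun h => he ?_⟩
      rw [Set.mem_singleton_iff] at h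
      rw [← h]
      exact hab'⟩
  exact (hH.coe.preconnected ⟨x, hx⟩ ⟨y, hy⟩).map f

lemma steinerDist_eq_ncard (hT : G.IsTree) (U : Set (Fin n)) (r : Fin n) (hr : r ∈ U) :
    steinerDist G U =
      {e | e ∈ G.edgeSet ∧ ∃ u ∈ U, ¬ (G.deleteEdges {e}).Reachable r u}.ncard := by
  have key : ∀ H : G.Subgraph, H.Connected → U ⊆ H.verts →
      {e | e ∈ G.edgeSet ∧ ∃ u ∈ U, ¬ (G.deleteEdges {e}).Reachable r u} ⊆ H.edgeSet := by
    rintro H hH hU e ⟨-, u, hu, h⟩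
    by_contra he
    exact h (reachable_of_notMem_edgeSet hH he (hU hr) (hU hu))
  obtain ⟨H, hH, -, hU, hE⟩ := exists_spanning_subgraph hT r U.toFinset
  rw [Set.coe_toFinset] at hU
  apply le_antisymm
  · refine Nat.sInf_le ⟨H, hH, hU, congrArg Set.ncard ?_⟩
    refine Set.Subset.antisymm (fun e he => ⟨H.edgeSet_subset he, ?_⟩) (key H hH hU)
    simpa using hE e he
  · refine le_csInf ⟨_, H, hH, hU, rfl⟩ ?_
    rintro m ⟨K, hK, hKU, rfl⟩
    exact Set.ncard_le_ncard (key K hK hKU) (Set.toFinite _)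

/-- Deleting an edge `s(u, v)` from a connected graph leaves no components other than
those of `u` and `v`. -/
lemma reachable_or_of_connected (hG : G.Connected) (u v w : Fin n) :
    (G.deleteEdges {s(u, v)}).Reachable v w ∨ (G.deleteEdges {s(u, v)}).Reachable u w := by
  obtain ⟨p⟩ := hG.preconnected w v
  have main : ∀ {a b : Fin n} (q : G.Walk a b), b = v →
      (G.deleteEdges {s(u, v)}).Reachable v a ∨ (G.deleteEdges {s(u, v)}).Reachable u a := by
    intro a b q hb
    induction q with
    | nil => exact Or.inl (hb ▸ .rfl)
    | @cons a b _ hab q ih =>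
      by_cases h : s(a, b) = s(u, v)
      · rcases Sym2.eq_iff.1 h with ⟨rfl, -⟩ | ⟨rfl, -⟩
        · exact Or.inr .rfl
        · exact Or.inl .rfl
      · have hadj : (G.deleteEdges {s(u, v)}).Adj b a := by
          rw [SimpleGraph.deleteEdges_adj, Sym2.eq_swap (a := b)]
          exact ⟨hab.symm, h⟩
        exact (ih hb).imp (·.trans hadj.reachable) (·.trans hadj.reachable)
  exact main p rfl

lemma reachable_iff_side (hG : G.Connected) {A : Sym2 (Fin n) → Set (Fin n)}
    (hA : IsEdgeSideChoice G A) {e : Sym2 (Fin n)} (he : e ∈ G.edgeSet) (x y : Fin n) :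
    (G.deleteEdges {e}).Reachable x y ↔ (x ∈ A e ↔ y ∈ A e) := by
  obtain ⟨u, v, rfl, hAe⟩ := hA e he
  rw [hAe]
  simp only [Set.mem_ofPred_eq]
  refine ⟨fun h => ⟨fun h' => h'.trans h, fun h' => h'.trans h.symm⟩, fun h => ?_⟩
  by_cases hx : (G.deleteEdges {s(u, v)}).Reachable v x
  · exact hx.symm.trans (h.1 hx)
  · have hy := fun h' => hx (h.2 h')
    exact ((reachable_or_of_connected hG u v x).resolve_left hx).symm.trans
      ((reachable_or_of_connected hG u v y).resolve_left hy)

/-- The Steiner distance of a nonempty tuple counts the edges having entries of the tuple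
on both sides. -/
lemma steinerDist_eq_card (hT : G.IsTree) {A : Sym2 (Fin n) → Set (Fin n)}
    (hA : IsEdgeSideChoice G A) {k : ℕ} (hk : 0 < k) (i : Fin k → Fin n) :
    (steinerDist G (Set.range i) : ℝ) =
      ∑ e ∈ G.edgeFinset, if (∀ j, i j ∈ A e) ∨ (∀ j, i j ∉ A e) then 0 else 1 := by
  rw [steinerDist_eq_ncard hT (Set.range i) (i ⟨0, hk⟩) ⟨_, rfl⟩]
  have : {e | e ∈ G.edgeSet ∧ ∃ u ∈ Set.range i, ¬ (G.deleteEdges {e}).Reachable (i ⟨0, hk⟩) u}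
      = (G.edgeFinset.filter fun e => ¬ ((∀ j, i j ∈ A e) ∨ (∀ j, i j ∉ A e)) :
          Finset (Sym2 (Fin n))) := by
    ext e
    simp only [Set.mem_ofPred_eq, Finset.coe_filter, SimpleGraph.mem_edgeFinset]
    refine and_congr_right fun he => ?_
    simp only [Set.exists_range_iff, reachable_iff_side hT.connected hA he]
    constructor
    · rintro ⟨j, hj⟩ (h | h)
      · exact hj (iff_of_true (h _) (h _))
      · exact hj (iff_of_false (h _) (h _))
    · intro h
      by_contra! h'
      by_cases h0 : i ⟨0, hk⟩ ∈ A e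
      · exact h (Or.inl fun j => (h' j).1 h0)
      · exact h (Or.inr fun j hj => h0 ((h' j).2 hj))
  rw [this, Set.ncard_coe_finset, Finset.card_filter]
  push_cast
  exact Finset.sum_congr rfl fun e _ => by split_ifs <;> simp_all

lemma prod_indicator_tuple {k : ℕ} (S : Set (Fin n)) (c : Fin n → ℝ) (i : Fin k → Fin n) :
    ∏ j, S.indicator c (i j) = if ∀ j, i j ∈ S then ∏ j, c (i j) else 0 := by
  split_ifs with h
  · exact Finset.prod_congr rfl fun j _ => Set.indicator_of_mem (h j) c
  · push Not at h
    obtain ⟨j, hj⟩ := h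
    exact Finset.prod_eq_zero (Finset.mem_univ j) (Set.indicator_of_notMem hj c)

/-- The contribution of a single edge with sides `S` and `Sᶜ` to the Steiner form. -/
lemma sum_split {k : ℕ} (hk : 0 < k) (S : Set (Fin n)) (c : Fin n → ℝ) :
    ∑ i : Fin k → Fin n, (if (∀ j, i j ∈ S) ∨ (∀ j, i j ∉ S) then 0 else 1) * ∏ j, c (i j) =
      (∑ i, c i) ^ k - (∑ i, S.indicator c i) ^ k - (∑ i, Sᶜ.indicator c i) ^ k := by
  rw [Fintype.sum_pow, Fintype.sum_pow, Fintype.sum_pow, ← Finset.sum_sub_distrib,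
    ← Finset.sum_sub_distrib]
  refine Finset.sum_congr rfl fun i _ => ?_
  rw [prod_indicator_tuple, prod_indicator_tuple]
  simp only [Set.mem_compl_iff]
  -- the two cases exclude each other only because the tuple is nonempty
  have hx : ¬ ((∀ j, i j ∈ S) ∧ (∀ j, i j ∉ S)) := fun h => h.2 ⟨0, hk⟩ (h.1 _)
  by_cases h1 : ∀ j, i j ∈ S
  · have h2 : ¬ ∀ j, i j ∉ S := fun h => hx ⟨h1, h⟩
    rw [if_pos (Or.inl h1), if_pos h1, if_neg h2]
    ring
  · by_cases h2 : ∀ j, i j ∉ S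
    · rw [if_pos (Or.inr h2), if_neg h1, if_pos h2]
      ring
    · rw [if_neg (not_or.2 ⟨h1, h2⟩), if_neg h1, if_neg h2]
      ring

theorem stmt1 (n k : ℕ) (hn : 2 ≤ n) (hk : 2 ≤ k) (hke : Even k)
    (G : SimpleGraph (Fin n)) (hT : G.IsTree)
    (A : Sym2 (Fin n) → Set (Fin n)) (hA : IsEdgeSideChoice G A)
    (c : Fin n → ℝ) (hc : ∑ i, c i = 0) :
    steinerForm G k (fun _ => c) =
      -2 * ∑ e ∈ G.edgeFinset, (∑ i, (A e).indicator c i) ^ k := by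
  have hk0 : 0 < k := by omega
  unfold steinerForm
  simp only [steinerDist_eq_card hT hA hk0, Finset.sum_mul]
  rw [Finset.sum_comm, Finset.mul_sum]
  refine Finset.sum_congr rfl fun e _ => ?_
  rw [sum_split hk0]
  have hcompl : ∑ i, (A e)ᶜ.indicator c i = -∑ i, (A e).indicator c i := by
    rw [eq_neg_iff_add_eq_zero, ← Finset.sum_add_distrib, ← hc]
    exact Finset.sum_congr rfl fun i _ => Set.indicator_compl_add_self_apply _ c i
  rw [hcompl, hke.neg_pow, hc, zero_pow hk0.ne']
  ring
end

section
/- Let T be a tree on vertex set {1,...,n} with n ≥ 2, let k ≥ 3 be odd, and let c ∈ ℝ^n with Σ_{i=1}^n c_i = 0. Then M(c,...,c) = 0. -/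
/-!
In a tree, the Steiner distance of a nonempty set `U` is the number of edges `e` separating
two vertices of `U`, i.e. such that some two vertices of `U` lie in different components of
`G - e`: every connected subgraph containing `U` must use such an edge, and the union of the
paths from a fixed vertex of `U` to the others uses no other edge (`steinerDist_eq_card`).

For one edge `e`, let `A` be the vertex set of one of the sides of `G - e` and `a = ∑_{w ∈ A} c w`.
With `χ` denoting indicator functions, the indicator of the event that `e` separates the entries
of `i` is `1 - ∏ⱼ χ_A (i j) - ∏ⱼ χ_{Aᶜ} (i j)` (`separates_indicator`), so the contribution
of `e` to the form is `(∑ c)^k - a^k - (∑ c - a)^k`. As `∑ c = 0` and `k` is odd this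
is `-a^k - (-a)^k = 0` (`sum_separates_eq_zero`).
-/

open scoped Classical

/-- The edge `e` separates two entries of the tuple `i`: with `i z` as base point, some entry
lies outside the component of `i z` in `G - e`. -/
def Separates {n k : ℕ} (G : SimpleGraph (Fin n)) (z : Fin k) (i : Fin k → Fin n)
    (e : Sym2 (Fin n)) : Prop :=
  ∃ j, ¬ (G.deleteEdges {e}).Reachable (i z) (i j)

lemma reachable_deleteEdges_or {n : ℕ} {G : SimpleGraph (Fin n)} (hG : G.Connected)
    (u v w : Fin n) : (G.deleteEdges {s(u, v)}).Reachable u w ∨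
      (G.deleteEdges {s(u, v)}).Reachable v w := by
  obtain ⟨p⟩ := hG.preconnected w u
  induction p with
  | nil => exact Or.inl (SimpleGraph.Reachable.refl _)
  | @cons a b x h p ih =>
    by_cases he : s(a, b) = s(x, v)
    · rcases Sym2.eq_iff.1 he with ⟨rfl, rfl⟩ | ⟨rfl, rfl⟩
      · exact Or.inl (SimpleGraph.Reachable.refl _)
      · exact Or.inr (SimpleGraph.Reachable.refl _)
    · have hab : (G.deleteEdges {s(x, v)}).Adj b a := by
        rw [SimpleGraph.deleteEdges_adj]
        exact ⟨h.symm, by rw [Set.mem_singleton_iff, Sym2.eq_swap]; exact he⟩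
      exact ih.imp (fun r => r.trans hab.reachable) (fun r => r.trans hab.reachable)

/-- A connected subgraph containing all entries of `i` uses every separating edge. -/
lemma mem_edgeSet_of_separates {n k : ℕ} {G : SimpleGraph (Fin n)} {z : Fin k}
    {i : Fin k → Fin n} {e : Sym2 (Fin n)} (hs : Separates G z i e)
    {H : G.Subgraph} (hH : H.Connected) (hU : Set.range i ⊆ H.verts) : e ∈ H.edgeSet := by
  obtain ⟨j, hj⟩ := hs
  by_contra he
  obtain ⟨-, hw⟩ := SimpleGraph.Subgraph.connected_iff_forall_exists_walk_subgraph H |>.1 hH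
  obtain ⟨p, hp⟩ := hw (hU ⟨z, rfl⟩) (hU ⟨j, rfl⟩)
  apply hj
  refine ⟨p.toDeleteEdge e fun hmem => he ?_⟩
  exact SimpleGraph.Subgraph.edgeSet_mono hp ((SimpleGraph.Walk.mem_edges_toSubgraph p).2 hmem)

/-- The union of the paths from `i z` to the other entries is connected and has only separating
edges. -/
lemma exists_subgraph_separates {n k : ℕ} {G : SimpleGraph (Fin n)} (hT : G.IsTree) (z : Fin k)
    (i : Fin k → Fin n) : ∃ H : G.Subgraph, H.Connected ∧ Set.range i ⊆ H.verts ∧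
      ∀ e ∈ H.edgeSet, Separates G z i e := by
  choose p hp using fun j => (hT.connected.preconnected (i z) (i j)).exists_isPath
  have hle : ∀ j, (p j).toSubgraph ≤ ⨆ j, (p j).toSubgraph := fun j =>
    le_iSup (fun j => (p j).toSubgraph) j
  refine ⟨⨆ j, (p j).toSubgraph, ?_, ?_, ?_⟩
  · rw [SimpleGraph.Subgraph.connected_iff_forall_exists_walk_subgraph]
    have key : ∀ w ∈ (⨆ j, (p j).toSubgraph).verts, ∃ q : G.Walk (i z) w,
        q.toSubgraph ≤ ⨆ j, (p j).toSubgraph := by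
      intro w hw
      simp only [SimpleGraph.Subgraph.verts_iSup, Set.mem_iUnion,
        SimpleGraph.Walk.mem_verts_toSubgraph] at hw
      obtain ⟨j, hj⟩ := hw
      refine ⟨(p j).takeUntil w hj, le_trans ?_ (hle j)⟩
      conv_rhs => rw [← (p j).take_spec hj, SimpleGraph.Walk.toSubgraph_append]
      exact le_sup_left
    refine ⟨⟨i z, (hle z).1 (by simp)⟩, fun {u v} hu hv => ?_⟩
    obtain ⟨q, hq⟩ := key u hu
    obtain ⟨r, hr⟩ := key v hv
    refine ⟨q.reverse.append r, ?_⟩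
    rw [SimpleGraph.Walk.toSubgraph_append, SimpleGraph.Walk.toSubgraph_reverse]
    exact sup_le hq hr
  · rintro _ ⟨j, rfl⟩
    exact (hle j).1 (by simp)
  · intro e he
    simp only [SimpleGraph.Subgraph.edgeSet_iSup, Set.mem_iUnion,
      SimpleGraph.Walk.mem_edges_toSubgraph] at he
    obtain ⟨j, hj⟩ := he
    refine ⟨j, fun hr => ?_⟩
    -- A path avoiding `e` would be a second path from `i z` to `i j` in the tree.
    obtain ⟨q, hq⟩ := hr.exists_isPath
    have hq' := hq.mapLe (SimpleGraph.deleteEdges_le {e})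
    have heq := congrArg Subtype.val ((hT.isAcyclic.subsingleton_path _ _).elim ⟨_, hp j⟩ ⟨_, hq'⟩)
    simp only at heq
    rw [heq, SimpleGraph.Walk.edges_mapLe_eq_edges] at hj
    have := q.edges_subset_edgeSet hj
    simp [SimpleGraph.edgeSet_deleteEdges] at this

lemma steinerDist_eq_card_s2 {n k : ℕ} {G : SimpleGraph (Fin n)} (hT : G.IsTree) (z : Fin k)
    (i : Fin k → Fin n) :
    steinerDist G (Set.range i) = (G.edgeFinset.filter (Separates G z i)).card := by
  obtain ⟨H, hH, hU, hsep⟩ := exists_subgraph_separates hT z i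
  have hcard : ((G.edgeFinset.filter (Separates G z i) : Finset _) : Set (Sym2 (Fin n))).ncard
      = (G.edgeFinset.filter (Separates G z i)).card := Set.ncard_coe_finset _
  rw [← hcard]
  apply le_antisymm
  · have hle : steinerDist G (Set.range i) ≤ H.edgeSet.ncard := Nat.sInf_le ⟨H, hH, hU, rfl⟩
    refine hle.trans (Set.ncard_le_ncard ?_ (Set.toFinite _))
    intro e he
    exact Finset.mem_coe.2 (Finset.mem_filter.2
      ⟨SimpleGraph.mem_edgeFinset.2 (H.edgeSet_subset he), hsep e he⟩)
  · refine le_csInf ⟨_, H, hH, hU, rfl⟩ ?_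
    rintro _ ⟨K, hK, hKU, rfl⟩
    refine Set.ncard_le_ncard ?_ (Set.toFinite _)
    intro e he
    exact mem_edgeSet_of_separates (Finset.mem_filter.1 (Finset.mem_coe.1 he)).2 hK hKU

/-- Indicator of separation by the edge `s(u, v)`, in terms of the side of `v`. -/
lemma separates_indicator {n k : ℕ} {G : SimpleGraph (Fin n)} (hG : G.Connected) (z : Fin k)
    (u v : Fin n) (i : Fin k → Fin n) :
    (if Separates G z i s(u, v) then (1 : ℝ) else 0) =
      1 - (∏ j, if (G.deleteEdges {s(u, v)}).Reachable v (i j) then (1 : ℝ) else 0)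
        - ∏ j, if (G.deleteEdges {s(u, v)}).Reachable v (i j) then (0 : ℝ) else 1 := by
  have hor := reachable_deleteEdges_or hG u v
  unfold Separates
  by_cases h1 : ∀ j, (G.deleteEdges {s(u, v)}).Reachable v (i j)
  · rw [if_neg, Finset.prod_eq_one, Finset.prod_eq_zero (Finset.mem_univ z)]
    · norm_num
    · exact if_pos (h1 z)
    · intro j _; exact if_pos (h1 j)
    · rintro ⟨j, hj⟩
      exact hj ((h1 z).symm.trans (h1 j))
  · obtain ⟨a, ha⟩ := not_forall.1 h1
    rw [Finset.prod_eq_zero (Finset.mem_univ a) (if_neg ha)]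
    by_cases h2 : ∀ j, ¬ (G.deleteEdges {s(u, v)}).Reachable v (i j)
    · rw [if_neg, Finset.prod_eq_one]
      · norm_num
      · intro j _; exact if_neg (h2 j)
      · rintro ⟨j, hj⟩
        exact hj (((hor _).resolve_right (h2 z)).symm.trans ((hor _).resolve_right (h2 j)))
    · obtain ⟨b, hb⟩ := not_forall.1 h2
      rw [not_not] at hb
      rw [if_pos, Finset.prod_eq_zero (Finset.mem_univ b)]
      · norm_num
      · exact if_pos hb
      · by_contra hno
        push Not at hno
        exact ha (hb.trans ((hno b).symm.trans (hno a)))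

lemma sum_separates_eq_zero {n k : ℕ} (hko : Odd k) {G : SimpleGraph (Fin n)} (hG : G.Connected)
    (z : Fin k) (c : Fin n → ℝ) (hc : ∑ i, c i = 0) (e : Sym2 (Fin n)) :
    ∑ i : Fin k → Fin n, (if Separates G z i e then (1 : ℝ) else 0) * ∏ j, c (i j) = 0 := by
  induction e using Sym2.ind with
  | _ u v =>
  simp only [separates_indicator hG, sub_mul, one_mul, ← Finset.prod_mul_distrib,
    Finset.sum_sub_distrib]
  rw [← Fintype.sum_pow c,
    ← Fintype.sum_pow (fun w =>
      (if (G.deleteEdges {s(u, v)}).Reachable v w then (1 : ℝ) else 0) * c w),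
    ← Fintype.sum_pow (fun w =>
      (if (G.deleteEdges {s(u, v)}).Reachable v w then (0 : ℝ) else 1) * c w), hc,
    zero_pow hko.pos.ne']
  have hneg : ∑ w, (if (G.deleteEdges {s(u, v)}).Reachable v w then (0 : ℝ) else 1) * c w =
      -∑ w, (if (G.deleteEdges {s(u, v)}).Reachable v w then (1 : ℝ) else 0) * c w := by
    rw [eq_neg_iff_add_eq_zero, ← Finset.sum_add_distrib]
    refine Eq.trans (Finset.sum_congr rfl fun w _ => ?_) hc
    split_ifs <;> ring
  rw [hneg, hko.neg_pow]
  ring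

theorem stmt2 (n k : ℕ) (hn : 2 ≤ n) (hk : 3 ≤ k) (hko : Odd k)
    (G : SimpleGraph (Fin n)) (hT : G.IsTree)
    (c : Fin n → ℝ) (hc : ∑ i, c i = 0) :
    steinerForm G k (fun _ => c) = 0 := by
  let z : Fin k := ⟨0, by omega⟩
  unfold steinerForm
  simp only [steinerDist_eq_card_s2 hT z, Finset.card_filter, Nat.cast_sum, Nat.cast_ite,
    Nat.cast_one, Nat.cast_zero, Finset.sum_mul]
  rw [Finset.sum_comm]
  exact Finset.sum_eq_zero fun e _ => sum_separates_eq_zero hko hT.connected z c hc e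
end

section
/- Let T be a tree on vertex set {1,...,n} with n ≥ 2, let k ≥ 3 be odd, and let c_1,...,c_k ∈ ℝ^n. Setting d_j = Z c_j for each j, one has M(c_1,...,c_k) = Σ_{t=1}^{k−1} (−1)^{t−1} Σ_{S ⊆ {1,...,k}, |S| = t} Σ_{w=1}^{n−1} ∏_{j ∈ S} (d_j)_w · ∏_{j ∉ S} (d_j)_n. (That is, M(c_1,...,c_k) = U(Zc_1,...,Zc_k).) -/
/-!
Root the tree at `r` and let `D w` be the set of descendants of `w` (`w` included). The edges of the
tree are the pairs `{w, parent w}` with `w ≠ r`, and removing such an edge splits the tree into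
`D w` and its complement. A connected subgraph containing `U` must use the edge above `w` whenever
`U` meets both sides, and the subgraph spanned by the ancestors of `U` up to their deepest common
ancestor uses no other edge. Hence the Steiner distance of a nonempty `U` is the number of
`w ≠ r` for which `U` meets both `D w` and its complement (`steinerDist_eq_card`).

For a tuple `i`, the indicator of that event is
`1 - ∏ j, [i j ∈ D w] - ∏ j, (1 - [i j ∈ D w])`. Summing against `∏ j, c j (i j)` gives
`∏ j, d j r - ∏ j, d j w - ∏ j, (d j r - d j w)` for each `w`. In the expansion of the last product
over subsets of the index set, the empty subset cancels the first term and, as `k` is odd, the full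
subset cancels the second (`prod_sub_expand`). What is left is the asserted sum.
-/

open scoped Classical

/-- The zeta matrix of a graph `G` rooted at `r`: entry `(x, y)` is `1` if `x` lies on
the (unique, when `G` is a tree) shortest path from `y` to `r`, and `0` otherwise. -/
noncomputable def zetaMatrix {n : ℕ} (G : SimpleGraph (Fin n)) (r : Fin n) :
    Matrix (Fin n) (Fin n) ℝ :=
  Matrix.of fun x y => if G.dist y x + G.dist x r = G.dist y r then 1 else 0

/-! ### Descendants in a rooted tree -/

/-- The descendants of `w` (with `w` itself) in `G` rooted at `r`: the vertices `x` for which `w`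
lies on a geodesic from `x` to `r`. -/
def descSet {n : ℕ} (G : SimpleGraph (Fin n)) (r w : Fin n) : Set (Fin n) :=
  {x | G.dist x w + G.dist w r = G.dist x r}

/-- A neighbour of `x` one step closer to the root is unique: two of them would give two paths
from `x` to `r`. -/
lemma parent_unique {n : ℕ} {G : SimpleGraph (Fin n)} (hT : G.IsTree) {r x y z : Fin n}
    (hy : G.Adj x y) (hz : G.Adj x z) (hdy : G.dist y r + 1 = G.dist x r)
    (hdz : G.dist z r + 1 = G.dist x r) : y = z := by
  obtain ⟨p, hp⟩ := hT.connected.exists_walk_length_eq_dist y r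
  obtain ⟨q, hq⟩ := hT.connected.exists_walk_length_eq_dist z r
  have h1 : (SimpleGraph.Walk.cons hy p).IsPath :=
    SimpleGraph.Walk.isPath_of_length_eq_dist _ (by simp [hp, hdy])
  have h2 : (SimpleGraph.Walk.cons hz q).IsPath :=
    SimpleGraph.Walk.isPath_of_length_eq_dist _ (by simp [hq, hdz])
  have h := (hT.isAcyclic.subsingleton_path x r).elim ⟨_, h1⟩ ⟨_, h2⟩
  have h' := congrArg (fun p : G.Path x r => p.1.getVert 1) h
  simpa using h'

lemma exists_closer {n : ℕ} {G : SimpleGraph (Fin n)} (hG : G.Connected) {x w : Fin n}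
    (hne : x ≠ w) : ∃ z, G.Adj x z ∧ G.dist z w + 1 = G.dist x w := by
  obtain ⟨p, hp⟩ := hG.exists_walk_length_eq_dist x w
  cases p with
  | nil => exact absurd rfl hne
  | cons h q =>
    rename_i z
    refine ⟨z, h, ?_⟩
    have h1 := SimpleGraph.dist_le q
    have h2 := hG.dist_triangle (u := x) (v := z) (w := w)
    rw [SimpleGraph.dist_eq_one_iff_adj.2 h] at h2
    simp only [SimpleGraph.Walk.length_cons] at hp
    omega

lemma adj_dist_cases {n : ℕ} {G : SimpleGraph (Fin n)} (hT : G.IsTree) (r : Fin n) {x y : Fin n}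
    (h : G.Adj x y) : G.dist y r + 1 = G.dist x r ∨ G.dist x r + 1 = G.dist y r := by
  have h1 := hT.dist_ne_of_adj r h
  have h2 := h.diff_dist_adj (u := r)
  simp only [SimpleGraph.dist_comm (u := r)] at h1 h2
  omega

/-- The parent of a proper descendant of `w` is again a descendant of `w`. -/
lemma parent_mem_descSet {n : ℕ} {G : SimpleGraph (Fin n)} (hT : G.IsTree) {r w x y : Fin n}
    (hx : x ∈ descSet G r w) (hne : x ≠ w) (hy : G.Adj x y)
    (hd : G.dist y r + 1 = G.dist x r) : y ∈ descSet G r w := by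
  obtain ⟨z, hz, hzd⟩ := exists_closer hT.connected hne
  have hx' : G.dist x w + G.dist w r = G.dist x r := hx
  have h1 := hT.connected.dist_triangle (u := z) (v := w) (w := r)
  have hzr : G.dist z r + 1 = G.dist x r := by
    rcases adj_dist_cases hT r hz with h | h <;> omega
  obtain rfl := parent_unique hT hy hz hd hzr
  change G.dist y w + G.dist w r = G.dist y r
  omega

lemma self_mem_descSet {n : ℕ} (G : SimpleGraph (Fin n)) (r w : Fin n) : w ∈ descSet G r w := by
  simp [descSet]

lemma mem_descSet_root {n : ℕ} (G : SimpleGraph (Fin n)) (r x : Fin n) : x ∈ descSet G r r := by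
  simp [descSet]

lemma descSet_trans {n : ℕ} {G : SimpleGraph (Fin n)} (hG : G.Connected) {r x y w : Fin n}
    (hx : x ∈ descSet G r y) (hy : y ∈ descSet G r w) : x ∈ descSet G r w := by
  simp only [descSet, Set.mem_ofPred_eq] at *
  have h1 := hG.dist_triangle (u := x) (v := y) (w := w)
  have h2 := hG.dist_triangle (u := x) (v := w) (w := r)
  omega

lemma mem_descSet_parent {n : ℕ} {G : SimpleGraph (Fin n)} {r x y : Fin n}
    (h : G.Adj x y) (hd : G.dist y r + 1 = G.dist x r) : x ∈ descSet G r y := by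
  simp only [descSet, Set.mem_ofPred_eq, SimpleGraph.dist_eq_one_iff_adj.2 h]
  omega

/-- The only edge leaving `descSet G r w` joins `w` to its parent. -/
lemma crossing_edge {n : ℕ} {G : SimpleGraph (Fin n)} (hT : G.IsTree) {r w x y : Fin n}
    (h : G.Adj x y) (hx : x ∈ descSet G r w) (hy : y ∉ descSet G r w) :
    x = w ∧ G.dist y r + 1 = G.dist w r := by
  rcases adj_dist_cases hT r h with hd | hd
  · by_cases hne : x = w
    · exact ⟨hne, hne ▸ hd⟩
    · exact absurd (parent_mem_descSet hT hx hne h hd) hy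
  · exact absurd (descSet_trans hT.connected (mem_descSet_parent h.symm hd) hx) hy

/-- The ancestors of a vertex form a chain. -/
lemma descSet_comparable {n : ℕ} {G : SimpleGraph (Fin n)} (hT : G.IsTree) {r w m : Fin n} :
    ∀ (N : ℕ) (x : Fin n), G.dist x r = N → x ∈ descSet G r w → x ∈ descSet G r m →
      w ∈ descSet G r m ∨ m ∈ descSet G r w := by
  intro N
  induction N with
  | zero =>
    intro x hN hw hm
    simp only [descSet, Set.mem_ofPred_eq] at hw
    obtain rfl : x = w := hT.connected.dist_eq_zero_iff.1 (by omega)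
    exact Or.inl hm
  | succ N ih =>
    intro x hN hw hm
    by_cases hxw : x = w
    · exact Or.inl (hxw ▸ hm)
    by_cases hxm : x = m
    · exact Or.inr (hxm ▸ hw)
    have hxr : x ≠ r := by
      rintro rfl
      simp at hN
    obtain ⟨y, hy, hd⟩ := exists_closer hT.connected hxr
    exact ih y (by omega) (parent_mem_descSet hT hw hxw hy hd) (parent_mem_descSet hT hm hxm hy hd)

/-! ### Steiner distance as a count of separating edges -/

/-- The vertices whose parent edge separates `U`. -/
noncomputable def sepSet {n : ℕ} (G : SimpleGraph (Fin n)) (r : Fin n) (U : Set (Fin n)) :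
    Finset (Fin n) :=
  Finset.univ.filter fun w => (∃ x ∈ U, x ∈ descSet G r w) ∧ ∃ x ∈ U, x ∉ descSet G r w

lemma mem_sepSet {n : ℕ} {G : SimpleGraph (Fin n)} {r w : Fin n} {U : Set (Fin n)} :
    w ∈ sepSet G r U ↔ (∃ x ∈ U, x ∈ descSet G r w) ∧ ∃ x ∈ U, x ∉ descSet G r w := by
  simp [sepSet]

/-- A connected subgraph containing `U` contains every parent edge that separates `U`. -/
lemma sepSet_card_le {n : ℕ} {G : SimpleGraph (Fin n)} (hT : G.IsTree) {r : Fin n}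
    {U : Set (Fin n)} (H : G.Subgraph) (hH : H.Connected) (hU : U ⊆ H.verts) :
    (sepSet G r U).card ≤ H.edgeSet.ncard := by
  -- each separating vertex is joined to its parent within `H`
  have key : ∀ w ∈ sepSet G r U, ∃ y, H.Adj w y ∧ G.dist y r + 1 = G.dist w r := by
    intro w hw
    obtain ⟨⟨x, hxU, hx⟩, y, hyU, hy⟩ := mem_sepSet.1 hw
    obtain ⟨p⟩ := hH.coe ⟨x, hU hxU⟩ ⟨y, hU hyU⟩
    obtain ⟨d, -, hd1, hd2⟩ := p.exists_boundary_dart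
      (Subtype.val ⁻¹' (descSet G r w)) hx hy
    have hadj : H.Adj d.fst.1 d.snd.1 := d.adj
    obtain ⟨h1, h2⟩ := crossing_edge hT hadj.adj_sub hd1 hd2
    exact ⟨d.snd.1, h1 ▸ hadj, h2⟩
  choose! f hf using key
  rw [← Set.ncard_coe_finset]
  refine Set.ncard_le_ncard_of_injOn (fun w => s(w, f w)) ?_ ?_ (Set.toFinite _)
  · intro w hw
    exact (hf w hw).1
  · intro a ha b hb hab
    have h1 := (hf a ha).2
    have h2 := (hf b hb).2
    rcases Sym2.eq_iff.1 hab with h | h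
    · exact h.1
    · -- `a` and `b` would be parents of each other
      rw [h.2] at h1
      rw [← h.1] at h2
      omega

/-- The ancestors of vertices of `U` up to the deepest common ancestor of `U` span a connected
subgraph all of whose edges separate `U`. -/
lemma exists_steiner_subgraph {n : ℕ} {G : SimpleGraph (Fin n)} (hT : G.IsTree) (r : Fin n)
    {U : Set (Fin n)} (hne : U.Nonempty) :
    ∃ H : G.Subgraph, H.Connected ∧ U ⊆ H.verts ∧ H.edgeSet.ncard ≤ (sepSet G r U).card := by
  -- `m` is the deepest common ancestor of `U`
  obtain ⟨m, hm, hmax⟩ := Finset.exists_max_image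
    (Finset.univ.filter fun m => U ⊆ descSet G r m) (fun m => G.dist m r)
    ⟨r, Finset.mem_filter.2 ⟨Finset.mem_univ r, fun x _ => mem_descSet_root G r x⟩⟩
  simp only [Finset.mem_filter, Finset.mem_univ, true_and] at hm hmax
  let W : Set (Fin n) := {v | v ∈ descSet G r m ∧ ∃ x ∈ U, x ∈ descSet G r v}
  have hmW : m ∈ W := by
    obtain ⟨x, hx⟩ := hne
    exact ⟨self_mem_descSet G r m, x, hx, hm hx⟩
  have hsep : ∀ w ∈ W, w ≠ m → w ∈ sepSet G r U := by
    rintro w ⟨hw1, hw2⟩ hwm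
    refine mem_sepSet.2 ⟨hw2, ?_⟩
    by_contra! hcon
    have h1 := hmax w hcon
    have h2 := hT.connected.pos_dist_of_ne hwm
    simp only [descSet, Set.mem_ofPred_eq] at hw1
    omega
  have hpar : ∀ w ∈ W, w ≠ m → ∃ y ∈ W, G.Adj w y ∧ G.dist y r + 1 = G.dist w r := by
    rintro w ⟨hw1, x, hxU, hx⟩ hwm
    have hwr : w ≠ r := by
      rintro rfl
      have h2 := hT.connected.pos_dist_of_ne hwm
      simp only [descSet, Set.mem_ofPred_eq, SimpleGraph.dist_self] at hw1
      omega
    obtain ⟨y, hy, hd⟩ := exists_closer hT.connected hwr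
    exact ⟨y, ⟨parent_mem_descSet hT hw1 hwm hy hd, x, hxU,
      descSet_trans hT.connected hx (mem_descSet_parent hy hd)⟩, hy, hd⟩
  have hreach : ∀ (N : ℕ) (w : Fin n) (hw : w ∈ W), G.dist w r = N →
      (G.induce W).Reachable ⟨w, hw⟩ ⟨m, hmW⟩ := by
    intro N
    induction N with
    | zero =>
      intro w hw hN
      by_cases hwm : w = m
      · subst hwm
        exact SimpleGraph.Reachable.refl _
      · obtain ⟨y, -, -, hd⟩ := hpar w hw hwm
        omega
    | succ N ih =>
      intro w hw hN
      by_cases hwm : w = m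
      · subst hwm
        exact SimpleGraph.Reachable.refl _
      · obtain ⟨y, hyW, hy, hd⟩ := hpar w hw hwm
        have hadj : (G.induce W).Adj ⟨w, hw⟩ ⟨y, hyW⟩ := hy
        exact hadj.reachable.trans (ih y hyW (by omega))
  refine ⟨(⊤ : G.Subgraph).induce W, ?_, ?_, ?_⟩
  · rw [← SimpleGraph.connected_induce_iff, SimpleGraph.connected_iff]
    exact ⟨fun a b => (hreach _ a.1 a.2 rfl).trans (hreach _ b.1 b.2 rfl).symm, ⟨⟨m, hmW⟩⟩⟩
  · intro x hx
    exact ⟨hm hx, x, hx, self_mem_descSet G r x⟩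
  · -- every edge of the induced subgraph is the parent edge of some `w ≠ m`
    have key : ∀ w ∈ sepSet G r U ∩ (Finset.univ.filter fun w => w ∈ W ∧ w ≠ m),
        ∃ y, G.Adj w y ∧ G.dist y r + 1 = G.dist w r := by
      intro w hw
      simp only [Finset.mem_inter, Finset.mem_filter, Finset.mem_univ, true_and] at hw
      obtain ⟨y, -, h⟩ := hpar w hw.2.1 hw.2.2
      exact ⟨y, h⟩
    choose! f hf using key
    have hdown : ∀ x ∈ W, ∀ y ∈ W, G.Adj x y → G.dist y r + 1 = G.dist x r →
        x ∈ sepSet G r U ∧ y = f x := by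
      intro x hx y hy hadj hd
      have hxm : x ≠ m := by
        rintro rfl
        have := hy.1
        simp only [descSet, Set.mem_ofPred_eq] at this
        omega
      have hs := hsep x hx hxm
      have hfx := hf x (by simp [hs, hx, hxm])
      exact ⟨hs, parent_unique hT hadj hfx.1 hd hfx.2⟩
    have hsub : ((⊤ : G.Subgraph).induce W).edgeSet ⊆
        ((sepSet G r U).image fun w => s(w, f w) : Finset (Sym2 (Fin n))) := by
      intro e
      induction e using Sym2.ind with
      | _ x y =>
        intro he
        obtain ⟨hx, hy, hadj⟩ : x ∈ W ∧ y ∈ W ∧ G.Adj x y := by simpa using he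
        simp only [Finset.coe_image, Set.mem_image, Finset.mem_coe]
        rcases adj_dist_cases hT r hadj with hd | hd
        · obtain ⟨h1, h2⟩ := hdown x hx y hy hadj hd
          exact ⟨x, h1, by rw [h2]⟩
        · obtain ⟨h1, h2⟩ := hdown y hy x hx hadj.symm hd
          exact ⟨y, h1, by rw [h2, Sym2.eq_swap]⟩
    refine (Set.ncard_le_ncard hsub (Finset.finite_toSet _)).trans ?_
    rw [Set.ncard_coe_finset]
    exact Finset.card_image_le

/-- In a tree, the Steiner distance counts the edges that separate the given set. -/
lemma steinerDist_eq_card_s10 {n : ℕ} {G : SimpleGraph (Fin n)} (hT : G.IsTree) (r : Fin n)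
    {U : Set (Fin n)} (hne : U.Nonempty) : steinerDist G U = (sepSet G r U).card := by
  obtain ⟨H, hH, hU, hc⟩ := exists_steiner_subgraph hT r hne
  apply le_antisymm
  · have h : steinerDist G U ≤ H.edgeSet.ncard := Nat.sInf_le ⟨H, hH, hU, rfl⟩
    exact h.trans hc
  · obtain ⟨K, hK, hUK, hKc⟩ := Nat.sInf_mem
      (s := {m | ∃ H : G.Subgraph, H.Connected ∧ U ⊆ H.verts ∧ H.edgeSet.ncard = m})
      ⟨_, H, hH, hU, rfl⟩
    exact (sepSet_card_le hT K hK hUK).trans hKc.le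

/-! ### The multilinear form -/

/-- For a tuple `i`, the indicator of `w ∈ sepSet G r (range i)` is
`1 - ∏ [i j ∈ D w] - ∏ (1 - [i j ∈ D w])`; the root contributes nothing. -/
lemma steinerDist_cast {n k : ℕ} (hk : 0 < k) {G : SimpleGraph (Fin n)} (hT : G.IsTree)
    (r : Fin n) (i : Fin k → Fin n) :
    (steinerDist G (Set.range i) : ℝ) = ∑ w ∈ Finset.univ.erase r,
      (1 - ∏ j, zetaMatrix G r w (i j) - ∏ j, (1 - zetaMatrix G r w (i j))) := by
  rw [steinerDist_eq_card_s10 hT r ⟨i ⟨0, hk⟩, Set.mem_range_self _⟩]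
  have hr : r ∉ sepSet G r (Set.range i) := by
    intro h
    obtain ⟨-, x, -, hx⟩ := mem_sepSet.1 h
    exact hx (mem_descSet_root G r x)
  have hz : ∀ w y, zetaMatrix G r w y = if y ∈ descSet G r w then 1 else 0 := by
    intro w y
    simp only [zetaMatrix, Matrix.of_apply, descSet, Set.mem_ofPred_eq]
    congr
  have hterm : ∀ w, (1 - ∏ j, zetaMatrix G r w (i j) - ∏ j, (1 - zetaMatrix G r w (i j)))
      = if w ∈ sepSet G r (Set.range i) then (1 : ℝ) else 0 := by
    intro w
    simp only [hz, mem_sepSet, Set.exists_range_iff]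
    by_cases h1 : ∃ a, i a ∈ descSet G r w
    · have e2 : ∏ j, (1 - if i j ∈ descSet G r w then (1 : ℝ) else 0) = 0 := by
        obtain ⟨a, ha⟩ := h1
        exact Finset.prod_eq_zero (Finset.mem_univ a) (by simp [ha])
      by_cases h2 : ∃ a, i a ∉ descSet G r w
      · have e1 : ∏ j, (if i j ∈ descSet G r w then (1 : ℝ) else 0) = 0 := by
          obtain ⟨a, ha⟩ := h2
          exact Finset.prod_eq_zero (Finset.mem_univ a) (by simp [ha])
        rw [e1, e2, if_pos ⟨h1, h2⟩]
        norm_num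
      · rw [e2, if_neg (fun h => h2 h.2)]
        push Not at h2
        simp [h2]
    · have e1 : ∏ j, (if i j ∈ descSet G r w then (1 : ℝ) else 0) = 0 :=
        Finset.prod_eq_zero (Finset.mem_univ ⟨0, hk⟩) (if_neg fun h => h1 ⟨_, h⟩)
      rw [e1, if_neg (fun h => h1 h.1)]
      push Not at h1
      simp [h1]
  simp only [hterm]
  rw [Finset.sum_ite_mem, Finset.sum_const, nsmul_eq_mul, mul_one]
  congr 2
  ext w
  simp only [Finset.mem_inter, Finset.mem_erase, Finset.mem_univ, and_true]
  exact ⟨fun h => ⟨fun e => hr (e ▸ h), h⟩, fun h => h.2⟩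

/-- For odd `k`, the two extreme terms of `∏ (b j - a j)` cancel `∏ b j` and `∏ a j`. -/
lemma prod_sub_expand {k : ℕ} (hk : 0 < k) (hko : Odd k) (a b : Fin k → ℝ) :
    ∏ j, b j - ∏ j, a j - ∏ j, (b j - a j) = ∑ t ∈ Finset.Icc 1 (k - 1), (-1 : ℝ) ^ (t - 1) *
      ∑ S ∈ Finset.powersetCard t (Finset.univ : Finset (Fin k)),
        (∏ j ∈ S, a j) * ∏ j ∈ Sᶜ, b j := by
  have hexp : ∏ j, (b j - a j) = ∑ t ∈ Finset.range (k + 1), (-1 : ℝ) ^ t *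
      ∑ S ∈ Finset.powersetCard t (Finset.univ : Finset (Fin k)),
        (∏ j ∈ S, a j) * ∏ j ∈ Sᶜ, b j := by
    have : ∀ j, b j - a j = -a j + b j := fun j => by ring
    simp only [this]
    rw [Finset.prod_add, Finset.sum_powerset]
    simp only [Finset.card_univ, Fintype.card_fin]
    refine Finset.sum_congr rfl fun t _ => ?_
    rw [Finset.mul_sum]
    refine Finset.sum_congr rfl fun S hS => ?_
    rw [Finset.prod_neg, (Finset.mem_powersetCard.1 hS).2, ← Finset.compl_eq_univ_sdiff, mul_assoc]
  obtain ⟨l, rfl⟩ : ∃ l, k = l + 1 := ⟨k - 1, by omega⟩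
  rw [hexp, Finset.sum_range_succ, Finset.sum_range_succ', Finset.range_eq_Ico,
    Finset.sum_Ico_add' (fun t => (-1 : ℝ) ^ t *
      ∑ S ∈ Finset.powersetCard t (Finset.univ : Finset (Fin (l + 1))),
        (∏ j ∈ S, a j) * ∏ j ∈ Sᶜ, b j) 0 l 1]
  have hfull : Finset.powersetCard (l + 1) (Finset.univ : Finset (Fin (l + 1))) = {Finset.univ} := by
    simpa using Finset.powersetCard_self (Finset.univ : Finset (Fin (l + 1)))
  have hI : Finset.Icc 1 (l + 1 - 1) = Finset.Ico (0 + 1) (l + 1) := by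
    ext t
    simp only [Finset.mem_Icc, Finset.mem_Ico]
    omega
  rw [hfull, hko.neg_one_pow, hI]
  simp only [Finset.powersetCard_zero, Finset.sum_singleton, Finset.prod_empty, Finset.compl_empty,
    Finset.compl_univ, pow_zero]
  have hneg : ∑ t ∈ Finset.Ico (0 + 1) (l + 1), (-1 : ℝ) ^ (t - 1) *
      ∑ S ∈ Finset.powersetCard t (Finset.univ : Finset (Fin (l + 1))),
        (∏ j ∈ S, a j) * ∏ j ∈ Sᶜ, b j
      = -∑ t ∈ Finset.Ico (0 + 1) (l + 1), (-1 : ℝ) ^ t *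
      ∑ S ∈ Finset.powersetCard t (Finset.univ : Finset (Fin (l + 1))),
        (∏ j ∈ S, a j) * ∏ j ∈ Sᶜ, b j := by
    rw [← Finset.sum_neg_distrib]
    refine Finset.sum_congr rfl fun t ht => ?_
    obtain ⟨s, rfl⟩ : ∃ s, t = s + 1 := ⟨t - 1, by simp only [Finset.mem_Ico] at ht; omega⟩
    rw [Nat.add_sub_cancel, pow_succ]
    ring
  rw [hneg]
  ring

theorem stmt10 (n k : ℕ) (hn : 2 ≤ n) (hk : 3 ≤ k) (hko : Odd k)
    (G : SimpleGraph (Fin n)) (hT : G.IsTree)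
    (c : Fin k → Fin n → ℝ) :
    let vn : Fin n := ⟨n - 1, by omega⟩
    let d : Fin k → Fin n → ℝ := fun j => (zetaMatrix G vn).mulVec (c j)
    steinerForm G k c =
      ∑ t ∈ Finset.Icc 1 (k - 1), (-1 : ℝ) ^ (t - 1) *
        ∑ S ∈ Finset.powersetCard t (Finset.univ : Finset (Fin k)),
          ∑ w ∈ Finset.univ.erase vn,
            (∏ j ∈ S, d j w) * ∏ j ∈ Sᶜ, d j vn := by
  intro vn d
  have hd : ∀ j w, d j w = ∑ y, zetaMatrix G vn w y * c j y := fun j w => rfl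
  have hdn : ∀ j, d j vn = ∑ y, c j y := by
    intro j
    simp [hd, zetaMatrix]
  have hR : ∑ t ∈ Finset.Icc 1 (k - 1), (-1 : ℝ) ^ (t - 1) *
        ∑ S ∈ Finset.powersetCard t (Finset.univ : Finset (Fin k)),
          ∑ w ∈ Finset.univ.erase vn, (∏ j ∈ S, d j w) * ∏ j ∈ Sᶜ, d j vn
      = ∑ w ∈ Finset.univ.erase vn,
        (∏ j, d j vn - ∏ j, d j w - ∏ j, (d j vn - d j w)) := by
    simp only [prod_sub_expand (by omega : 0 < k) hko]
    rw [Finset.sum_comm]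
    refine Finset.sum_congr rfl fun t _ => ?_
    rw [← Finset.mul_sum, Finset.sum_comm]
  rw [hR]
  unfold steinerForm
  simp only [steinerDist_cast (by omega : 0 < k) hT vn, Finset.sum_mul]
  rw [Finset.sum_comm]
  refine Finset.sum_congr rfl fun w _ => ?_
  have hsub : ∀ j, d j vn - d j w = ∑ y, (1 - zetaMatrix G vn w y) * c j y := by
    intro j
    rw [hdn, hd, ← Finset.sum_sub_distrib]
    exact Finset.sum_congr rfl fun y _ => by ring
  simp only [hsub]
  simp only [hdn, hd, Finset.prod_univ_sum, Fintype.piFinset_univ, ← Finset.sum_sub_distrib]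
  refine Finset.sum_congr rfl fun i _ => ?_
  rw [Finset.prod_mul_distrib, Finset.prod_mul_distrib]
  ring
end
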